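/- arXiv:1603.01115 — 6 statements merged into one kernel-verified Lean document; each statement's English description precedes it below -/
import Mathlib

section
/- Fix K ≥ 1 and reals α_i > 0, E_i^b ≥ 0, w_i > 0, and energies E_i with 0 < E_i < E_i^b + w_i for i = 1,…,K. Set τ₀* = min( max(0, max_i (E_i − E_i^b)/w_i), 1 ) and τ_i* = α_i·E_i·(1 − τ₀*) / (Σ_{j=1}^K α_j·E_j) for i = 1,…,K. Then (τ₀*, τ₁*,…,τ_K*) satisfies Σ_{i=1}^K τ_i* ≤ 1 − τ₀*, τ_i* ≥ 0 for all i, and τ₀* ≥ (E_i − E_i^b)/w_i for every i; and for every (τ₀, τ₁,…,τ_K) with τ_i ≥ 0 for all i, Σ_{i=1}^K τ_i ≤ 1 − τ₀, and τ₀ ≥ (E_i − E_i^b)/w_i for all i, one has Σ_{i=1}^K τ_i · log₂(1 + α_i·E_i/τ_i) ≤ Σ_{i=1}^K τ_i* · log₂(1 + α_i·E_i/τ_i*), where terms with τ_i = 0 are interpreted as 0. -/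
theorem aux_tangent (c s x : ℝ) (hc : 0 < c) (hs : 0 ≤ s) (hx : 0 < x) :
    s * Real.log (1 + c / s) ≤ s * (Real.log (1 + x) - x / (1 + x)) + c / (1 + x) := by
  rcases hs.eq_or_lt with h | h
  · subst h
    simp only [zero_mul, zero_add]
    positivity
  · have h1 : 0 < 1 + c / s := by positivity
    have h2 : 0 < 1 + x := by positivity
    have h3 := Real.log_le_sub_one_of_pos (div_pos h1 h2)
    rw [Real.log_div h1.ne' h2.ne'] at h3
    have h4 := mul_le_mul_of_nonneg_left h3 h.le
    have h5 : s * ((1 + c / s) / (1 + x) - 1) = - (s * (x / (1 + x))) + c / (1 + x) := by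
      field_simp
      ring
    rw [h5] at h4
    linarith

theorem aux_coef (x : ℝ) (hx : 0 < x) : 0 ≤ Real.log (1 + x) - x / (1 + x) := by
  have h2 : 0 < 1 + x := by positivity
  have h := Real.one_sub_inv_le_log_of_pos h2
  have h5 : x / (1 + x) = 1 - (1 + x)⁻¹ := by
    field_simp
    ring
  linarith

/-- Theorem 2 of the paper: given energies `E` with
`0 < E i < Eb i + w i`, the time allocations
`τ₀* = min (max 0 (maxᵢ (Eᵢ - Ebᵢ)/wᵢ)) 1` and
`τᵢ* = αᵢ Eᵢ (1 - τ₀*) / Σⱼ αⱼ Eⱼ` are feasible and maximize the sum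
throughput `Σᵢ τᵢ log₂(1 + αᵢ Eᵢ / τᵢ)` over all nonnegative `(τ₀, τ)` with
`Σᵢ τᵢ ≤ 1 - τ₀` and `τ₀ ≥ (Eᵢ - Ebᵢ)/wᵢ` for all `i`.  (In Lean,
`τ * Real.logb 2 (1 + c / τ)` equals `0` at `τ = 0`, matching the convention
that terms with `τᵢ = 0` are interpreted as `0`.) -/
theorem opt_time_allocation_given_energy (K : ℕ) (hK : 1 ≤ K)
    (α Eb w E : Fin K → ℝ)
    (hα : ∀ i, 0 < α i) (hEb : ∀ i, 0 ≤ Eb i) (hw : ∀ i, 0 < w i)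
    (hE : ∀ i, 0 < E i ∧ E i < Eb i + w i)
    (τ0 : ℝ) (hτ0 : τ0 = min (max 0 (⨆ i, (E i - Eb i) / w i)) 1)
    (τ : Fin K → ℝ)
    (hτ : ∀ i, τ i = α i * E i * (1 - τ0) / ∑ j, α j * E j) :
    (0 ≤ τ0 ∧ (∑ i, τ i) ≤ 1 - τ0 ∧ (∀ i, 0 ≤ τ i) ∧
      ∀ i, (E i - Eb i) / w i ≤ τ0) ∧
    ∀ (σ0 : ℝ) (σ : Fin K → ℝ), 0 ≤ σ0 → (∀ i, 0 ≤ σ i) →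
      (∑ i, σ i) ≤ 1 - σ0 → (∀ i, (E i - Eb i) / w i ≤ σ0) →
      (∑ i, σ i * Real.logb 2 (1 + α i * E i / σ i)) ≤
        ∑ i, τ i * Real.logb 2 (1 + α i * E i / τ i) := by
  haveI : Nonempty (Fin K) := ⟨⟨0, hK⟩⟩
  have hbdd : BddAbove (Set.range fun i => (E i - Eb i) / w i) := Set.finite_range _ |>.bddAbove
  have hlt : (⨆ i, (E i - Eb i) / w i) < 1 := by
    obtain ⟨i, hi⟩ := exists_eq_ciSup_of_finite (f := fun i => (E i - Eb i) / w i)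
    rw [← hi]
    show (E i - Eb i) / w i < 1
    rw [div_lt_one (hw i)]
    linarith [(hE i).2]
  have hm : max 0 (⨆ i, (E i - Eb i) / w i) < 1 := max_lt one_pos hlt
  rw [min_eq_left hm.le] at hτ0
  have hT : 0 < 1 - τ0 := by rw [hτ0]; linarith
  have hc : ∀ i, 0 < α i * E i := fun i => mul_pos (hα i) (hE i).1
  have hS : 0 < ∑ j, α j * E j :=
    Finset.sum_pos (fun i _ => hc i) Finset.univ_nonempty
  generalize hSS : (∑ j, α j * E j) = S at *
  have hτp : ∀ i, 0 < τ i := fun i => by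
    rw [hτ i]; exact div_pos (mul_pos (hc i) hT) hS
  have hsum : ∑ i, τ i = 1 - τ0 := by
    simp_rw [hτ]
    rw [← Finset.sum_div, ← Finset.sum_mul, hSS]
    field_simp
  refine ⟨⟨hτ0 ▸ le_max_left _ _, hsum.le, fun i => (hτp i).le, fun i => ?_⟩, ?_⟩
  · rw [hτ0]
    exact (le_ciSup hbdd i).trans (le_max_right _ _)
  intro σ0 σ h0 hσ hle hcs
  have hτσ : τ0 ≤ σ0 := by
    rw [hτ0]; exact max_le h0 (ciSup_le hcs)
  have hx : 0 < S / (1 - τ0) := div_pos hS hT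
  have hr : ∀ i, α i * E i / τ i = S / (1 - τ0) := fun i => by
    have := hc i
    rw [hτ i, div_div_eq_mul_div, mul_div_mul_left _ _ this.ne']
  simp_rw [hr]
  rw [← Finset.sum_mul, hsum]
  simp only [Real.logb, ← mul_div_assoc]
  rw [← Finset.sum_div]
  refine div_le_div_of_nonneg_right ?_ (Real.log_pos one_lt_two).le
  have hmul : (1 - τ0) * (S / (1 - τ0)) = S := by field_simp
  generalize S / (1 - τ0) = x at *
  calc ∑ i, σ i * Real.log (1 + α i * E i / σ i)
      ≤ ∑ i, (σ i * (Real.log (1 + x) - x / (1 + x)) + α i * E i / (1 + x)) :=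
        Finset.sum_le_sum fun i _ => aux_tangent _ _ _ (hc i) (hσ i) hx
    _ = (∑ i, σ i) * (Real.log (1 + x) - x / (1 + x)) + S / (1 + x) := by
        rw [Finset.sum_add_distrib, ← Finset.sum_mul, ← Finset.sum_div, hSS]
    _ ≤ (1 - τ0) * (Real.log (1 + x) - x / (1 + x)) + S / (1 + x) := by
        have := mul_le_mul_of_nonneg_right (show ∑ i, σ i ≤ 1 - τ0 by linarith) (aux_coef x hx)
        linarith
    _ = (1 - τ0) * Real.log (1 + x) := by
        rw [← hmul]; ring
end

section
/- Let K ≥ 1, let c₁,…,c_K > 0 and S > 0 be reals. For every (τ₁,…,τ_K) with τ_i ≥ 0 and Σ_{i=1}^K τ_i ≤ S, one has Σ_{i=1}^K τ_i · log₂(1 + c_i/τ_i) ≤ S · log₂(1 + (Σ_{i=1}^K c_i)/S) (terms with τ_i = 0 interpreted as 0), and equality holds for τ_i = c_i·S/(Σ_{j=1}^K c_j); in particular the maximum of Σ_i τ_i · log₂(1 + c_i/τ_i) over the set {τ ≥ 0 : Σ_i τ_i ≤ S} equals S · log₂(1 + (Σ_i c_i)/S) and is attained at the proportional allocation τ_i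 = c_i·S/Σ_j c_j. -/
/-- Proportional time allocation: for `cᵢ > 0` and `S > 0`, every nonnegative
`τ` with `Σᵢ τᵢ ≤ S` satisfies
`Σᵢ τᵢ log₂(1 + cᵢ/τᵢ) ≤ S log₂(1 + (Σᵢ cᵢ)/S)`, the proportional allocation
`τᵢ = cᵢ S / Σⱼ cⱼ` is feasible, and it attains this bound with equality.
(In Lean, `τ * Real.logb 2 (1 + c / τ)` equals `0` at `τ = 0`.) -/
theorem proportional_allocation_optimal (K : ℕ) (hK : 1 ≤ K)
    (c : Fin K → ℝ) (S : ℝ) (hc : ∀ i, 0 < c i) (hS : 0 < S) :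
    (∀ τ : Fin K → ℝ, (∀ i, 0 ≤ τ i) → (∑ i, τ i) ≤ S →
      (∑ i, τ i * Real.logb 2 (1 + c i / τ i)) ≤
        S * Real.logb 2 (1 + (∑ i, c i) / S)) ∧
    (∀ i, 0 ≤ c i * S / ∑ j, c j) ∧
    (∑ i, c i * S / ∑ j, c j) ≤ S ∧
    (∑ i, (c i * S / ∑ j, c j) *
        Real.logb 2 (1 + c i / (c i * S / ∑ j, c j))) =
      S * Real.logb 2 (1 + (∑ i, c i) / S) := by
  have hC : 0 < ∑ i, c i :=
    Finset.sum_pos (fun i _ => hc i) ⟨⟨0, hK⟩, Finset.mem_univ _⟩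
  have h2 : 0 < Real.log 2 := Real.log_pos (by norm_num)
  have hsum : (∑ i, c i * S / ∑ j, c j) = S := by
    rw [← Finset.sum_div, ← Finset.sum_mul]
    field_simp
  refine ⟨?_, fun i => ?_, hsum.le, ?_⟩
  · intro τ hτ hT
    obtain ⟨C, hCe⟩ : ∃ C, C = ∑ i, c i := ⟨_, rfl⟩
    rw [← hCe] at hC ⊢
    have hq : 0 < 1 + C / S := by positivity
    obtain ⟨L, hL⟩ : ∃ L, L = Real.log (1 + C / S) := ⟨_, rfl⟩
    obtain ⟨q, hqe⟩ : ∃ q, q = (1 + C / S)⁻¹ := ⟨_, rfl⟩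
    have hq0 : 0 < q := by rw [hqe]; positivity
    have hLq : 1 - q ≤ L := by
      rw [hL, hqe]; exact Real.one_sub_inv_le_log_of_pos hq
    have hSC : (S + C) * q = S := by
      rw [hqe]; field_simp
    have key : ∀ i, τ i * Real.log (1 + c i / τ i) ≤ τ i * (L - 1 + q) + c i * q := by
      intro i
      have hci := hc i
      rcases (hτ i).eq_or_lt with h | h
      · rw [← h]; simp only [zero_mul, zero_add]; positivity
      · have hp : 0 < 1 + c i / τ i := by positivity
        have h1 := Real.log_le_sub_one_of_pos (mul_pos hp hq0)
        rw [Real.log_mul hp.ne' hq0.ne', hqe, Real.log_inv, ← hL, ← hqe] at h1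
        have h3 := mul_le_mul_of_nonneg_left h1 h.le
        have h4 : τ i * (c i / τ i) = c i := by field_simp
        linear_combination h3 + q * h4
    have hs := Finset.sum_le_sum (fun i (_ : i ∈ Finset.univ) => key i)
    rw [Finset.sum_add_distrib, ← Finset.sum_mul, ← Finset.sum_mul, ← hCe] at hs
    have hm := mul_le_mul_of_nonneg_right hT (by linarith : 0 ≤ L - 1 + q)
    have hf : ∑ i, τ i * Real.log (1 + c i / τ i) ≤ S * L := by
      linear_combination hs + hm + hSC
    simp only [Real.logb, ← mul_div_assoc]
    rw [← Finset.sum_div, ← hL]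
    exact div_le_div_of_nonneg_right hf h2.le
  · have := hc i
    positivity
  · have : ∀ i, c i / (c i * S / ∑ j, c j) = (∑ j, c j) / S := by
      intro i
      have := (hc i).ne'
      field_simp
    simp only [this]
    rw [← Finset.sum_mul, hsum]
end

section
/- Fix K ≥ 1 and reals τ_i > 0, α_i > 0, caps c_i > 0 for i = 1,…,K, and 0 < E_max < Σ_{i=1}^K c_i. Then there exists λ* < 0 such that the energies E_i* = min( max(0, −(τ_i/α_i)·(α_i/(λ*·ln 2) + 1)), c_i ) satisfy Σ_{i=1}^K E_i* = E_max, and this vector E* maximizes Σ_{i=1}^K τ_i · log₂(1 + α_i·E_i/τ_i) over the set {(E₁,…,E_K) : 0 ≤ E_i ≤ c_i for all i and Σ_{i=1}^K E_i ≤ E_max}. -/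
theorem wf_key (t a c w x s : ℝ) (ht : 0 < t) (ha : 0 < a) (hc : 0 < c) (hw : 0 < w)
    (hx0 : 0 ≤ x) (hxc : x ≤ c) (hs : s = min (max 0 (t * (w - 1 / a))) c) :
    t * Real.logb 2 (1 + a * x / t) ≤
      t * Real.logb 2 (1 + a * s / t) + (x - s) / (w * Real.log 2) := by
  have hl : 0 < Real.log 2 := Real.log_pos (by norm_num)
  have hs0 : 0 ≤ s := by rw [hs]; exact le_min (le_max_left _ _) hc.le
  have hX : 0 < 1 + a * x / t := by positivity
  have hS : 0 < 1 + a * s / t := by positivity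
  have h1 : Real.log (1 + a * x / t) - Real.log (1 + a * s / t) ≤
      (1 + a * x / t) / (1 + a * s / t) - 1 := by
    rw [← Real.log_div hX.ne' hS.ne']
    exact Real.log_le_sub_one_of_pos (by positivity)
  have hD : 0 < 1 / a + s / t := by positivity
  have h2 : t * ((1 + a * x / t) / (1 + a * s / t) - 1) = (x - s) / (1 / a + s / t) := by
    field_simp
    ring
  have h3 : (x - s) / (1 / a + s / t) ≤ (x - s) / w := by
    rw [div_le_div_iff₀ hD hw]
    have key : 0 ≤ (x - s) * (1 / a + s / t - w) := by
      rcases le_total (t * (w - 1 / a)) 0 with h | h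
      · have e : s = 0 := by rw [hs, max_eq_left h, min_eq_left hc.le]
        have : w - 1 / a ≤ 0 := by
          by_contra hh
          push Not at hh
          have := mul_pos ht hh
          linarith
        rw [e]
        apply mul_nonneg
        · linarith
        · rw [zero_div]; linarith
      · rw [max_eq_right h] at hs
        rcases le_total (t * (w - 1 / a)) c with h' | h'
        · rw [min_eq_left h'] at hs
          have : s / t = w - 1 / a := by rw [hs]; field_simp
          rw [this]
          apply le_of_eq; ring
        · rw [min_eq_right h'] at hs
          have : s / t ≤ w - 1 / a := by
            rw [div_le_iff₀ ht]; linarith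
          apply mul_nonneg_of_nonpos_of_nonpos <;> linarith
    linarith
  have h4 : t * (Real.log (1 + a * x / t) - Real.log (1 + a * s / t)) ≤ (x - s) / w :=
    (mul_le_mul_of_nonneg_left h1 ht.le).trans (h2.le.trans h3)
  have h5 := div_le_div_of_nonneg_right h4 hl.le
  have e1 : t * Real.logb 2 (1 + a * x / t) = t * Real.logb 2 (1 + a * s / t) +
      t * (Real.log (1 + a * x / t) - Real.log (1 + a * s / t)) / Real.log 2 := by
    simp only [Real.logb]
    ring
  rw [e1, ← div_div]
  linarith

/-- Second case of Theorem 3 (water-filling): if `0 < E_max < Σᵢ cᵢ`, there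
exists a multiplier `λ* < 0` such that the energies
`Eᵢ* = min (max 0 (-(τᵢ/αᵢ)(αᵢ/(λ* ln 2) + 1))) cᵢ` sum to `E_max` and
maximize `Σᵢ τᵢ log₂(1 + αᵢ Eᵢ/τᵢ)` over
`{E : 0 ≤ Eᵢ ≤ cᵢ, Σᵢ Eᵢ ≤ E_max}`. -/
theorem opt_energy_waterfilling (K : ℕ) (hK : 1 ≤ K) (τ α c : Fin K → ℝ)
    (Emax : ℝ) (hτ : ∀ i, 0 < τ i) (hα : ∀ i, 0 < α i) (hc : ∀ i, 0 < c i)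
    (hEmax : 0 < Emax) (hEmax' : Emax < ∑ i, c i) :
    ∃ lam : ℝ, lam < 0 ∧
      (∑ i, min (max 0 (-(τ i / α i) * (α i / (lam * Real.log 2) + 1)))
          (c i)) = Emax ∧
      ∀ E : Fin K → ℝ, (∀ i, 0 ≤ E i ∧ E i ≤ c i) → (∑ i, E i) ≤ Emax →
        (∑ i, τ i * Real.logb 2 (1 + α i * E i / τ i)) ≤
          ∑ i, τ i * Real.logb 2 (1 + α i *
            (min (max 0 (-(τ i / α i) * (α i / (lam * Real.log 2) + 1)))
              (c i)) / τ i) := by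
  have hl : 0 < Real.log 2 := Real.log_pos (by norm_num)
  obtain ⟨w, hw, hsum⟩ : ∃ w : ℝ, 0 < w ∧
      ∑ i, min (max 0 (τ i * (w - 1 / α i))) (c i) = Emax := by
    let g : ℝ → ℝ := fun w => ∑ i, min (max 0 (τ i * (w - 1 / α i))) (c i)
    have hg : Continuous g := by fun_prop
    have hnn : ∀ i, 0 ≤ 1 / α i + c i / τ i := fun i => by
      have := hτ i
      have := hα i
      have := hc i
      positivity
    have hW : 0 ≤ ∑ i, (1 / α i + c i / τ i) := Finset.sum_nonneg fun i _ => hnn i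
    have g0 : g 0 = 0 := by
      apply Finset.sum_eq_zero
      intro i _
      have : τ i * (0 - 1 / α i) ≤ 0 := by
        have := mul_pos (hτ i) (one_div_pos.2 (hα i))
        linarith
      rw [max_eq_left this, min_eq_left (hc i).le]
    have gW : g (∑ i, (1 / α i + c i / τ i)) = ∑ i, c i := by
      apply Finset.sum_congr rfl
      intro i _
      apply min_eq_right
      apply le_max_of_le_right
      have h := Finset.single_le_sum (f := fun i => 1 / α i + c i / τ i)
        (fun j _ => hnn j) (Finset.mem_univ i)
      have h' : c i / τ i ≤ ∑ i, (1 / α i + c i / τ i) - 1 / α i := by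
        linarith
      rw [div_le_iff₀ (hτ i)] at h'
      linarith
    obtain ⟨w, hw, hgw⟩ := intermediate_value_Icc hW hg.continuousOn
      (show Emax ∈ Set.Icc (g 0) (g _) by rw [g0, gW]; exact ⟨hEmax.le, hEmax'.le⟩)
    refine ⟨w, lt_of_le_of_ne hw.1 ?_, hgw⟩
    rintro rfl
    linarith
  have hterm : ∀ i, -(τ i / α i) * (α i / (-(1 / (w * Real.log 2)) * Real.log 2) + 1) =
      τ i * (w - 1 / α i) := by
    intro i
    have := (hα i).ne'
    have e : -(1 / (w * Real.log 2)) * Real.log 2 = -(1 / w) := by field_simp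
    rw [e]
    field_simp
    ring
  refine ⟨-(1 / (w * Real.log 2)), ?_, ?_, ?_⟩
  · have : 0 < 1 / (w * Real.log 2) := by positivity
    linarith
  · simp only [hterm]
    exact hsum
  · intro E hE hEs
    simp only [hterm]
    have h := Finset.sum_le_sum fun i (_ : i ∈ Finset.univ) =>
      wf_key (τ i) (α i) (c i) w (E i) _ (hτ i) (hα i) (hc i) hw (hE i).1 (hE i).2 rfl
    rw [Finset.sum_add_distrib, ← Finset.sum_div, Finset.sum_sub_distrib, hsum] at h
    have : (∑ i, E i - Emax) / (w * Real.log 2) ≤ 0 :=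
      div_nonpos_of_nonpos_of_nonneg (by linarith) (by positivity)
    linarith
end

section
/- Fix K ≥ 2 and reals α_i > 0, E_i^b > 0, w_i ≥ 0 for i = 1,…,K, and E_max > 0. Let F = {(E₁,…,E_K, τ₀, τ₁,…,τ_K) : τ_i ≥ 0 for i = 0,…,K, Σ_{i=0}^K τ_i ≤ 1, 0 ≤ E_i ≤ E_i^b + w_i·τ₀ for all i, and Σ_{i=1}^K E_i ≤ E_max}, and define R_i(E_i, τ_i) = τ_i · log₂(1 + α_i·E_i/τ_i) for τ_i > 0 and R_i(E_i, 0) = 0. If (E*, τ*) ∈ F satisfies min_{1 ≤ i ≤ K} R_i(E_i*, τ_i*) ≥ min_{1 ≤ i ≤ K} R_i(E_i, τ_i) for every (E, τ) ∈ F, then R_i(E_i*, τ_i*) = R_j(E_j*, τ_j*) for all i, j ∈ {1,…,K}. -/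
theorem rate_strictMono_aux {c s t : ℝ} (hc : 0 < c) (hs : 0 < s) (hst : s < t) :
    s * Real.logb 2 (1 + c / s) < t * Real.logb 2 (1 + c / t) := by
  have ht : 0 < t := hs.trans hst
  have h1 : 1 < t / s := by rw [lt_div_iff₀ hs]; linarith
  have hct : 0 < c / t := div_pos hc ht
  have hcs : 0 < c / s := div_pos hc hs
  have hb := one_add_mul_self_lt_rpow_one_add (s := c / t) (by linarith) hct.ne' h1
  have e : t / s * (c / t) = c / s := by field_simp
  rw [e] at hb
  have h2 := Real.logb_lt_logb (b := 2) (by norm_num) (by linarith) hb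
  rw [Real.logb_rpow_eq_mul_logb_of_pos (by linarith)] at h2
  have h3 := mul_lt_mul_of_pos_left h2 hs
  have e2 : s * (t / s * Real.logb 2 (1 + c / t)) = t * Real.logb 2 (1 + c / t) := by
    field_simp
  linarith

/-- Theorem 4 of the paper: any optimal policy of the max–min problem
`P1^Maxmin` equalizes the throughputs of all users.  Here `E : Fin K → ℝ`
collects the users' energies, `τ : Fin (K+1) → ℝ` the time allocations
(`τ 0` is the harvesting time, user `i` transmits during `τ i.succ`), and
`w i = ηᵢ P_B hᵢ`.  (In Lean, `τ * Real.logb 2 (1 + c / τ)` equals `0` at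
`τ = 0`, matching the convention `Rᵢ(Eᵢ, 0) = 0`.) -/
theorem maxmin_equal_rates (K : ℕ) (hK : 2 ≤ K) (α Eb w : Fin K → ℝ)
    (Emax : ℝ) (hα : ∀ i, 0 < α i) (hEb : ∀ i, 0 < Eb i)
    (hw : ∀ i, 0 ≤ w i) (hEmax : 0 < Emax)
    (Estar : Fin K → ℝ) (τstar : Fin (K + 1) → ℝ)
    (hfeas : (∀ i, 0 ≤ τstar i) ∧ (∑ i, τstar i) ≤ 1 ∧
      (∀ i : Fin K, 0 ≤ Estar i ∧ Estar i ≤ Eb i + w i * τstar 0) ∧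
      (∑ i, Estar i) ≤ Emax)
    (hopt : ∀ (E : Fin K → ℝ) (τ : Fin (K + 1) → ℝ),
      (∀ i, 0 ≤ τ i) → (∑ i, τ i) ≤ 1 →
      (∀ i : Fin K, 0 ≤ E i ∧ E i ≤ Eb i + w i * τ 0) →
      (∑ i, E i) ≤ Emax →
      (⨅ i : Fin K, τ i.succ * Real.logb 2 (1 + α i * E i / τ i.succ)) ≤
        ⨅ i : Fin K,
          τstar i.succ * Real.logb 2 (1 + α i * Estar i / τstar i.succ)) :
    ∀ i j : Fin K,
      τstar i.succ * Real.logb 2 (1 + α i * Estar i / τstar i.succ) =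
        τstar j.succ * Real.logb 2 (1 + α j * Estar j / τstar j.succ) := by
  obtain ⟨hτ, hsum, hE, hEs⟩ := hfeas
  have hKpos : (0:ℝ) < K := by
    have : 0 < K := by omega
    exact_mod_cast this
  haveI : Nonempty (Fin K) := ⟨⟨0, by omega⟩⟩
  set m := ⨅ i : Fin K,
          τstar i.succ * Real.logb 2 (1 + α i * Estar i / τstar i.succ) with hm
  have hle : ∀ i, m ≤ τstar i.succ * Real.logb 2 (1 + α i * Estar i / τstar i.succ) :=
    fun i => ciInf_le (Set.finite_range _).bddBelow i
  have hmpos : 0 < m := by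
    have h := hopt (fun i => min (Eb i) (Emax / K)) (fun _ => 1 / ((K:ℝ) + 1))
      (fun _ => by positivity)
      (by simp; rw [mul_inv_cancel₀]; positivity)
      (fun i => ⟨le_min (hEb i).le (by positivity),
        (min_le_left _ _).trans (le_add_of_nonneg_right (mul_nonneg (hw i) (by positivity)))⟩)
      (by
        calc ∑ i : Fin K, min (Eb i) (Emax / K) ≤ ∑ i : Fin K, Emax / K :=
              Finset.sum_le_sum fun i _ => min_le_right _ _
          _ = Emax := by simp; field_simp)
    refine lt_of_lt_of_le ?_ h
    obtain ⟨i, hi⟩ := exists_eq_ciInf_of_finite (f := fun i : Fin K =>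
      1 / ((K:ℝ) + 1) * Real.logb 2 (1 + α i * min (Eb i) (Emax / K) / (1 / ((K:ℝ) + 1))))
    rw [← hi]
    have h1 : 0 < min (Eb i) (Emax / K) := lt_min (hEb i) (by positivity)
    have h2 := hα i
    refine mul_pos (by positivity) (Real.logb_pos (by norm_num) ?_)
    have : 0 < α i * min (Eb i) (Emax / K) / (1 / ((K:ℝ) + 1)) := by positivity
    linarith
  have hτpos : ∀ i : Fin K, 0 < τstar i.succ := by
    intro i
    refine lt_of_le_of_ne (hτ _) fun h0 => ?_
    have := hle i
    rw [← h0] at this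
    simp at this
    linarith
  have hEpos : ∀ i : Fin K, 0 < Estar i := by
    intro i
    refine lt_of_le_of_ne (hE i).1 fun h0 => ?_
    have := hle i
    rw [← h0] at this
    simp at this
    linarith
  have key : ∀ j, τstar j.succ * Real.logb 2 (1 + α j * Estar j / τstar j.succ) = m := by
    intro j
    by_contra hne
    have hlt := lt_of_le_of_ne (hle j) (Ne.symm hne)
    have hc : 0 < α j * Estar j := mul_pos (hα j) (hEpos j)
    have hcont : ContinuousAt (fun s : ℝ => s * Real.logb 2 (1 + α j * Estar j / s))
        (τstar j.succ) := by
      have hp := hτpos j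
      have hne : 1 + α j * Estar j / τstar j.succ ≠ 0 := by positivity
      have hd : ContinuousAt (fun s : ℝ => 1 + α j * Estar j / s) (τstar j.succ) :=
        continuousAt_const.add (continuousAt_const.div continuousAt_id hp.ne')
      unfold Real.logb
      exact continuousAt_id.mul ((hd.log hne).div_const _)
    have hev := hcont.eventually (lt_mem_nhds hlt)
    obtain ⟨δ, hδ, hball⟩ := Metric.eventually_nhds_iff.1 hev
    obtain ⟨ε, hε, hε2⟩ := exists_between (lt_min hδ (hτpos j))
    have hε3 := lt_of_lt_of_le hε2 (min_le_left _ _)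
    have hε4 := lt_of_lt_of_le hε2 (min_le_right _ _)
    have hj : m < (τstar j.succ - ε) *
        Real.logb 2 (1 + α j * Estar j / (τstar j.succ - ε)) := by
      apply hball
      rw [Real.dist_eq]
      rw [show τstar j.succ - ε - τstar j.succ = -ε by ring, abs_neg, abs_of_pos hε]
      exact hε3
    have hεK : 0 < ε / K := by positivity
    have h := hopt Estar (Fin.cons (τstar 0)
      (fun i => if i = j then τstar j.succ - ε else τstar i.succ + ε / K))
      (by
        intro k
        refine Fin.cases ?_ (fun i => ?_) k
        · simpa using hτ 0
        · rw [Fin.cons_succ]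
          split_ifs
          · linarith
          · linarith [hτpos i])
      (by
        rw [Fin.sum_univ_succ] at hsum ⊢
        simp only [Fin.cons_zero, Fin.cons_succ]
        have : ∑ i : Fin K, (if i = j then τstar j.succ - ε else τstar i.succ + ε / K) ≤
            ∑ i : Fin K, (τstar i.succ + ε / K - (if i = j then ε else 0)) := by
          refine Finset.sum_le_sum fun i _ => ?_
          split_ifs with hij
          · subst hij; linarith
          · linarith
        rw [Finset.sum_sub_distrib, Finset.sum_add_distrib] at this
        have e : ∑ i : Fin K, ε / (K:ℝ) = ε := by simp; field_simp
        rw [e] at this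
        simp only [Finset.sum_ite_eq', Finset.mem_univ, if_true] at this
        linarith)
      (by simpa using hE) hEs
    simp only [Fin.cons_succ] at h
    obtain ⟨i, hi⟩ := exists_eq_ciInf_of_finite (f := fun i : Fin K =>
      (if i = j then τstar j.succ - ε else τstar i.succ + ε / K) *
        Real.logb 2 (1 + α i * Estar i /
          (if i = j then τstar j.succ - ε else τstar i.succ + ε / K)))
    rw [← hi] at h
    by_cases hij : i = j
    · subst hij
      simp only [if_true] at h
      linarith
    · simp only [if_neg hij] at h
      have h1 := rate_strictMono_aux (mul_pos (hα i) (hEpos i)) (hτpos i)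
        (show τstar i.succ < τstar i.succ + ε / K by linarith)
      linarith [hle i]
  intro i j
  rw [key i, key j]
end

section
/- Fix K ≥ 1 and reals γ_i > 0 for i = 1,…,K, set A = Σ_{i=1}^K γ_i, and let x* > 1 be the unique solution of x·ln x − x + 1 = A. Define τ₀* = (x* − 1)/(A + x* − 1) and τ_i* = γ_i/(A + x* − 1) for i = 1,…,K. Then Σ_{i=0}^K τ_i* = 1, all τ_i* > 0, and for every (τ₀, τ₁,…,τ_K) with τ_i ≥ 0 for all i and Σ_{i=0}^K τ_i ≤ 1, one has Σ_{i=1}^K τ_i · log₂(1 + γ_i·τ₀/τ_i) ≤ Σ_{i=1}^K τ_i* · log₂(1 + γ_i·τ₀*/τ_i*), where terms with τ_i = 0 are interpreted as 0. -/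
/-- Closed-form optimal time allocation of problem P3 (WPCNs with RF energy
harvesting nodes only, equation (11)): with `A = Σᵢ γᵢ` and `x* > 1` the
solution of `x ln x - x + 1 = A`, the allocation
`τ₀* = (x*-1)/(A+x*-1)`, `τᵢ* = γᵢ/(A+x*-1)` sums to one, is positive, and
maximizes `Σᵢ τᵢ log₂(1 + γᵢ τ₀ / τᵢ)` over all nonnegative `τ` with
`Σ_{i=0}^K τᵢ ≤ 1`.  (`τ 0` is the harvesting time; user `i` transmits during
`τ i.succ`; in Lean `τ * Real.logb 2 (1 + c / τ)` equals `0` at `τ = 0`.) -/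
theorem P3_opt_time_allocation (K : ℕ) (hK : 1 ≤ K) (γ : Fin K → ℝ)
    (hγ : ∀ i, 0 < γ i) (x : ℝ) (hx : 1 < x)
    (hxeq : x * Real.log x - x + 1 = ∑ i, γ i)
    (τstar : Fin (K + 1) → ℝ)
    (hτ0 : τstar 0 = (x - 1) / ((∑ i, γ i) + x - 1))
    (hτi : ∀ i : Fin K, τstar i.succ = γ i / ((∑ i, γ i) + x - 1)) :
    (∑ i, τstar i) = 1 ∧ (∀ i, 0 < τstar i) ∧
    ∀ τ : Fin (K + 1) → ℝ, (∀ i, 0 ≤ τ i) → (∑ i, τ i) ≤ 1 →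
      (∑ i : Fin K, τ i.succ * Real.logb 2 (1 + γ i * τ 0 / τ i.succ)) ≤
        ∑ i : Fin K,
          τstar i.succ * Real.logb 2 (1 + γ i * τstar 0 / τstar i.succ) := by
  have hx0 : 0 < x := by linarith
  have hL : 0 < Real.log x := Real.log_pos hx
  obtain ⟨A, hA⟩ : ∃ A, A = ∑ i, γ i := ⟨_, rfl⟩
  rw [← hA] at hxeq hτ0
  simp only [← hA] at hτi
  have hApos : 0 < A := by
    rw [hA]
    exact Finset.sum_pos (fun i _ => hγ i) ⟨⟨0, hK⟩, Finset.mem_univ _⟩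
  have hD : 0 < A + x - 1 := by linarith
  have hDe : A + x - 1 = x * Real.log x := by linarith
  have hl2 : 0 < Real.log 2 := Real.log_pos (by norm_num)
  refine ⟨?_, ?_, ?_⟩
  · rw [Fin.sum_univ_succ, hτ0]
    simp only [hτi]
    rw [← Finset.sum_div, ← hA, ← add_div, div_eq_one_iff_eq hD.ne']
    ring
  · intro i
    refine Fin.cases ?_ (fun j => ?_) i
    · rw [hτ0]; exact div_pos (by linarith) hD
    · rw [hτi]; exact div_pos (hγ j) hD
  · intro τ hτ hsum
    rw [Fin.sum_univ_succ] at hsum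
    have hR : ∑ i : Fin K,
        τstar i.succ * Real.logb 2 (1 + γ i * τstar 0 / τstar i.succ)
        = A / x / Real.log 2 := by
      have : ∀ i : Fin K, τstar i.succ * Real.logb 2 (1 + γ i * τstar 0 / τstar i.succ)
          = γ i * (1 / x / Real.log 2) := by
        intro i
        have h1 : 1 + γ i * τstar 0 / τstar i.succ = x := by
          rw [hτ0, hτi]
          have := (hγ i).ne'
          have := hD.ne'
          field_simp
          ring
        rw [h1, hτi, hDe, Real.logb]
        field_simp
      rw [Finset.sum_congr rfl (fun i _ => this i), ← Finset.sum_mul, ← hA]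
      ring
    rw [hR]
    have key : ∀ i : Fin K, τ i.succ * Real.logb 2 (1 + γ i * τ 0 / τ i.succ)
        ≤ (τ i.succ * A + γ i * τ 0) * (1 / x / Real.log 2) := by
      intro i
      have hg := hγ i
      have h0 := hτ 0
      rcases (hτ i.succ).eq_or_lt with h | h
      · rw [← h]
        simp only [zero_mul, zero_add]
        positivity
      · have hy : 0 < 1 + γ i * τ 0 / τ i.succ := by positivity
        have h2 := Real.log_le_sub_one_of_pos (div_pos hy hx0)
        rw [Real.log_div hy.ne' hx0.ne'] at h2
        have h3 : τ i.succ * Real.log (1 + γ i * τ 0 / τ i.succ)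
            ≤ (τ i.succ * A + γ i * τ 0) * (1 / x) := by
          calc _ ≤ τ i.succ * (Real.log x + ((1 + γ i * τ 0 / τ i.succ) / x - 1)) :=
                mul_le_mul_of_nonneg_left (by linarith) h.le
            _ = _ := by
                rw [← hxeq]
                field_simp
                ring
        calc _ = τ i.succ * Real.log (1 + γ i * τ 0 / τ i.succ) / Real.log 2 := by
              rw [Real.logb]; ring
          _ ≤ (τ i.succ * A + γ i * τ 0) * (1 / x) / Real.log 2 :=
              div_le_div_of_nonneg_right h3 hl2.le
          _ = _ := by ring
    refine (Finset.sum_le_sum (fun i _ => key i)).trans ?_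
    rw [← Finset.sum_mul, Finset.sum_add_distrib, ← Finset.sum_mul, ← Finset.sum_mul, ← hA]
    have h5 : (0:ℝ) ≤ A * (1 / x / Real.log 2) := by positivity
    have h6 := mul_le_mul_of_nonneg_right hsum h5
    calc _ = (τ 0 + ∑ i : Fin K, τ i.succ) * (A * (1 / x / Real.log 2)) := by ring
      _ ≤ _ := h6
      _ = _ := by ring
end

section
/- Fix integers M ≥ 1, N ≥ 1 and reals γ_i > 0 (i = 1,…,M), θ_j > 0 (j = 1,…,N), a > 0, E_max > 0; set A₁ = Σ_i γ_i and A₂ = Σ_j θ_j. Assume either (i) N·A₁ < a·A₂, or (ii) N·A₁ > a·A₂ and A₂·E_max ≥ N·(x₁* − 1), where x₁* > 1 is the unique solution of x·ln x − x + 1 = A₁ − (a/N)·A₂. Then the allocation τ₀ = 0, τ_{1,i} = 0 for all i, τ_{2,j} = θ_j/A₂ for all j, and Ē = E_max/N is feasible and maximizes Σ_{i=1}^M τ_{1,i}·log₂(1 + γ_i·τ₀/τ_{1,i}) + Σ_{j=1}^N τ_{2,j}·log₂(1 + θ_j·Ē/τ_{2,j}) over all (τ₀, τ_{1,1},…,τ_{1,M},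 τ_{2,1},…,τ_{2,N}, Ē) ≥ 0 with τ₀ + Σ_i τ_{1,i} + Σ_j τ_{2,j} ≤ 1 and a·τ₀ + N·Ē ≤ E_max. -/
theorem aux_tangent_s12 (t c X : ℝ) (ht : 0 ≤ t) (hc : 0 ≤ c) (hX : 0 < X) :
    t * Real.logb 2 (1 + c / t) ≤
      (t * (Real.log X - 1 + 1 / X) + c * (1 / X)) / Real.log 2 := by
  have h2 : 0 < Real.log 2 := Real.log_pos (by norm_num)
  rw [Real.logb, ← mul_div_assoc]
  apply div_le_div_of_nonneg_right _ h2.le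
  rcases ht.eq_or_lt with h | h
  · subst h
    simp only [zero_mul, zero_add]
    positivity
  · have hy : 0 < 1 + c / t := by positivity
    have h3 := Real.log_le_sub_one_of_pos (div_pos hy hX)
    rw [Real.log_div hy.ne' hX.ne'] at h3
    have h4 := mul_le_mul_of_nonneg_left h3 h.le
    have h5 : t * ((1 + c / t) / X - 1) = t * (1 / X) + c * (1 / X) - t := by
      field_simp
    rw [h5] at h4
    linarith

theorem aux_mono (x X : ℝ) (hx : 1 ≤ x) (hX : x ≤ X) :
    x * Real.log x - x + 1 ≤ X * Real.log X - X + 1 := by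
  have hx0 : 0 < x := by linarith
  have hX0 : 0 < X := by linarith
  have h3 := Real.log_le_sub_one_of_pos (div_pos hx0 hX0)
  rw [Real.log_div hx0.ne' hX0.ne'] at h3
  have h4 := mul_le_mul_of_nonneg_left h3 hX0.le
  have h5 : X * (x / X - 1) = x - X := by field_simp
  have h6 := mul_nonneg (sub_nonneg.2 hX) (Real.log_nonneg hx)
  rw [h5] at h4
  linarith

/-- Third regime of Theorem 3 of the paper (all resources to the legacy,
Type II, nodes): if either `N A₁ < a A₂`, or `N A₁ > a A₂` and
`A₂ E_max ≥ N (x₁* - 1)` for the unique `x₁* > 1` solving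
`x ln x - x + 1 = A₁ - (a/N) A₂`, then the allocation `τ₀ = 0`,
`τ_{1,i} = 0`, `τ_{2,j} = θⱼ/A₂`, `Ē = E_max/N` is feasible and maximizes
the sum throughput of problem P4.  (In Lean,
`τ * Real.logb 2 (1 + c / τ)` equals `0` at `τ = 0`.) -/
theorem P4_opt_all_legacy (M N : ℕ) (hM : 1 ≤ M) (hN : 1 ≤ N)
    (γ : Fin M → ℝ) (θ : Fin N → ℝ) (a Emax : ℝ)
    (hγ : ∀ i, 0 < γ i) (hθ : ∀ j, 0 < θ j) (ha : 0 < a) (hEmax : 0 < Emax)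
    (hcase : (N : ℝ) * (∑ i, γ i) < a * (∑ j, θ j) ∨
      ((N : ℝ) * (∑ i, γ i) > a * (∑ j, θ j) ∧
        ∃ x₁ : ℝ, 1 < x₁ ∧
          x₁ * Real.log x₁ - x₁ + 1 =
            (∑ i, γ i) - (a / (N : ℝ)) * (∑ j, θ j) ∧
          (∑ j, θ j) * Emax ≥ (N : ℝ) * (x₁ - 1))) :
    ((0:ℝ) ≤ 0 ∧ (∀ i : Fin M, (0:ℝ) ≤ 0) ∧
      (∀ j, 0 ≤ θ j / ∑ k, θ k) ∧ 0 ≤ Emax / (N : ℝ) ∧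
      (0:ℝ) + (∑ _i : Fin M, (0:ℝ)) + (∑ j, θ j / ∑ k, θ k) ≤ 1 ∧
      a * 0 + (N : ℝ) * (Emax / (N : ℝ)) ≤ Emax) ∧
    ∀ (τ0 : ℝ) (τ1 : Fin M → ℝ) (τ2 : Fin N → ℝ) (Ebar : ℝ),
      0 ≤ τ0 → (∀ i, 0 ≤ τ1 i) → (∀ j, 0 ≤ τ2 j) → 0 ≤ Ebar →
      τ0 + (∑ i, τ1 i) + (∑ j, τ2 j) ≤ 1 →
      a * τ0 + (N : ℝ) * Ebar ≤ Emax →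
      (∑ i, τ1 i * Real.logb 2 (1 + γ i * τ0 / τ1 i)) +
          (∑ j, τ2 j * Real.logb 2 (1 + θ j * Ebar / τ2 j)) ≤
        (∑ _i : Fin M, (0:ℝ) * Real.logb 2 (1 + γ _i * 0 / (0:ℝ))) +
          ∑ j, (θ j / ∑ k, θ k) *
            Real.logb 2 (1 + θ j * (Emax / (N : ℝ)) / (θ j / ∑ k, θ k)) := by
  have hN0 : (0:ℝ) < N := by exact_mod_cast hN
  have hne : (Finset.univ : Finset (Fin N)).Nonempty := ⟨⟨0, hN⟩, Finset.mem_univ _⟩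
  have hA2 : 0 < ∑ j, θ j := Finset.sum_pos (fun j _ => hθ j) hne
  have hs1 : ∑ j, θ j / ∑ k, θ k = 1 := by
    rw [← Finset.sum_div, div_self hA2.ne']
  refine ⟨⟨le_refl _, fun _ => le_refl _, fun j => (div_pos (hθ j) hA2).le,
    (div_pos hEmax hN0).le, ?_, ?_⟩, ?_⟩
  · rw [hs1]; simp
  · rw [mul_div_cancel₀ _ hN0.ne']; simp
  intro τ0 τ1 τ2 Ebar h0 h1 h2 hE hT hen
  obtain ⟨X, hXdef⟩ : ∃ X, X = 1 + (∑ j, θ j) * Emax / N := ⟨_, rfl⟩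
  have hX1 : 1 ≤ X := by
    rw [hXdef]
    have : 0 < (∑ j, θ j) * Emax / N := by positivity
    linarith
  have hX0 : 0 < X := by linarith
  have hl2 : 0 < Real.log 2 := Real.log_pos (by norm_num)
  have hrhs : (∑ _i : Fin M, (0:ℝ) * Real.logb 2 (1 + γ _i * 0 / (0:ℝ))) +
          ∑ j, (θ j / ∑ k, θ k) *
            Real.logb 2 (1 + θ j * (Emax / (N : ℝ)) / (θ j / ∑ k, θ k))
        = Real.log X / Real.log 2 := by
    have : ∀ j, 1 + θ j * (Emax / (N : ℝ)) / (θ j / ∑ k, θ k) = X := by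
      intro j
      have := hθ j
      rw [hXdef]
      field_simp
    simp only [this]
    rw [← Finset.sum_mul, hs1]
    simp [Real.logb]
  rw [hrhs]
  have hb1 := Finset.sum_le_sum (fun i (_ : i ∈ Finset.univ) =>
    aux_tangent_s12 (τ1 i) (γ i * τ0) X (h1 i) (mul_nonneg (hγ i).le h0) hX0)
  have hb2 := Finset.sum_le_sum (fun j (_ : j ∈ Finset.univ) =>
    aux_tangent_s12 (τ2 j) (θ j * Ebar) X (h2 j) (mul_nonneg (hθ j).le hE) hX0)
  refine (add_le_add hb1 hb2).trans ?_
  rw [← Finset.sum_div, ← Finset.sum_div, ← add_div]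
  apply div_le_div_of_nonneg_right _ hl2.le
  simp only [Finset.sum_add_distrib, ← Finset.sum_mul]
  clear hb1 hb2 hrhs hs1
  have hkey : (∑ i, γ i) - (a / (N : ℝ)) * (∑ j, θ j) ≤ X * Real.log X - X + 1 := by
    rcases hcase with h | ⟨_, x, hx, hxe, hxE⟩
    · have h3 := aux_mono 1 X le_rfl hX1
      have h4 : (∑ i, γ i) < a * (∑ j, θ j) / N := by
        rw [lt_div_iff₀ hN0]; linarith
      have h5 : (a / (N : ℝ)) * (∑ j, θ j) = a * (∑ j, θ j) / N := by ring
      simp only [Real.log_one] at h3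
      linarith
    · rw [← hxe]
      apply aux_mono x X hx.le
      have : x - 1 ≤ (∑ j, θ j) * Emax / N := by
        rw [le_div_iff₀ hN0]; linarith
      linarith
  generalize (∑ i, γ i) = A1 at *
  generalize (∑ j, θ j) = A2 at *
  generalize (∑ i, τ1 i) = T1 at *
  generalize (∑ i, τ2 i) = T2 at *
  have hEb : Ebar ≤ (Emax - a * τ0) / N := by
    rw [le_div_iff₀ hN0]; linarith
  have hk : 0 ≤ Real.log X - 1 + 1 / X := by
    have := Real.one_sub_inv_le_log_of_pos hX0
    rw [one_div]; linarith
  have e1 : (T1 + T2) * (Real.log X - 1 + 1 / X) ≤ (1 - τ0) * (Real.log X - 1 + 1 / X) :=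
    mul_le_mul_of_nonneg_right (by linarith) hk
  have hi : 0 < 1 / X := by positivity
  have e2 : A2 * Ebar * (1 / X) ≤ A2 * ((Emax - a * τ0) / N) * (1 / X) := by gcongr
  have e3 := mul_le_mul_of_nonneg_left hkey (mul_nonneg h0 hi.le)
  have e4 : A2 * ((Emax - a * τ0) / N) = (X - 1) - (a / N) * A2 * τ0 := by
    rw [hXdef]; ring
  rw [e4] at e2
  have e5 : X * (1 / X) = 1 := by field_simp
  have e6 : τ0 * (1 / X) * (X * Real.log X - X + 1)
      = τ0 * (Real.log X - 1 + 1 / X) := by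
    linear_combination (τ0 * Real.log X - τ0) * e5
  rw [e6] at e3
  linarith
end
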